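/- arXiv:2107.01394 — 2 statements merged into one kernel-verified Lean document; each statement's English description precedes it below -/
import Mathlib

section
/- Let α, β ≥ 0 with α ≠ β, and let F₁(x,y) = (y(1+βxy)/(1+αxy), x(1+αxy)/(1+βxy)) on (0,∞)². If X and Y are independent (0,∞)-valued random variables with X ~ GIG(λ, c₁α, c₂) and Y ~ GIG(λ, c₂β, c₁) for some λ ∈ ℝ and c₁, c₂ > 0, then (U,V) := F₁(X,Y) are independent, with U ~ GIG(λ, c₂α, c₁) and V ~ GIG(λ, c₁β, c₂). -/
open MeasureTheory ProbabilityTheory Set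

/-- Density of the generalized inverse Gaussian distribution GIG(l, c1, c2):
proportional to `x^(l-1) * exp(-c1*x - c2/x)` on `(0,∞)`. -/
noncomputable def gigPdf (l c1 c2 : ℝ) : ℝ → ℝ := fun x =>
  if 0 < x then
    x ^ (l - 1) * Real.exp (-(c1 * x) - c2 / x) /
      (∫ t in Set.Ioi (0 : ℝ), t ^ (l - 1) * Real.exp (-(c1 * t) - c2 / t))
  else 0

/-- The transformation F₁ with parameters α, β. -/
noncomputable def F1 (α β : ℝ) : ℝ × ℝ → ℝ × ℝ := fun p =>
  (p.2 * (1 + β * p.1 * p.2) / (1 + α * p.1 * p.2),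
   p.1 * (1 + α * p.1 * p.2) / (1 + β * p.1 * p.2))

open scoped ENNReal

/-- unnormalised density -/
noncomputable def gr (l a b : ℝ) : ℝ → ℝ := fun x => x ^ (l - 1) * Real.exp (-(a * x) - b / x)

lemma gr_meas (l a b : ℝ) : Measurable (gr l a b) := by
  unfold gr; fun_prop

/-- unnormalised measure -/
noncomputable def gm (l a b : ℝ) : Measure ℝ :=
  (volume.restrict (Ioi (0:ℝ))).withDensity (fun x => ENNReal.ofReal (gr l a b x))

instance (l a b : ℝ) : SFinite (gm l a b) := by unfold gm; infer_instance

lemma gr_int_nonneg (l a b : ℝ) : 0 ≤ ∫ t in Ioi (0:ℝ), gr l a b t :=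
  setIntegral_nonneg measurableSet_Ioi (fun x hx => by
    have : (0:ℝ) < x := hx
    unfold gr; positivity)

lemma pdf_eq (l a b : ℝ) :
    volume.withDensity (fun x => ENNReal.ofReal (gigPdf l a b x)) =
      ENNReal.ofReal (∫ t in Ioi (0:ℝ), gr l a b t)⁻¹ • gm l a b := by
  have h0 := gr_int_nonneg l a b
  have : (fun x => ENNReal.ofReal (gigPdf l a b x)) =
      (Ioi (0:ℝ)).indicator (ENNReal.ofReal (∫ t in Ioi (0:ℝ), gr l a b t)⁻¹ •
        (fun x => ENNReal.ofReal (gr l a b x))) := by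
    funext x
    by_cases hx : 0 < x
    · rw [indicator_of_mem (show x ∈ Ioi (0:ℝ) from hx)]
      simp only [gigPdf, if_pos hx, Pi.smul_apply, smul_eq_mul]
      rw [← ENNReal.ofReal_mul (inv_nonneg.2 h0), div_eq_inv_mul]
      rfl
    · rw [indicator_of_notMem (show x ∉ Ioi (0:ℝ) from hx)]
      simp [gigPdf, hx]
  rw [this, withDensity_indicator measurableSet_Ioi,
    withDensity_smul _ (gr_meas l a b).ennreal_ofReal]
  rfl

lemma pdf_eq' (l a b : ℝ) (h0 : gm l a b univ ≠ 0) (h1 : gm l a b univ ≠ ∞) :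
    volume.withDensity (fun x => ENNReal.ofReal (gigPdf l a b x)) =
      (gm l a b univ)⁻¹ • gm l a b := by
  rw [pdf_eq]
  congr 1
  have e : ∫ t in Ioi (0:ℝ), gr l a b t = (gm l a b univ).toReal := by
    rw [integral_eq_lintegral_of_nonneg_ae]
    · simp [gm]
    · filter_upwards [ae_restrict_mem measurableSet_Ioi] with x hx
      have : (0:ℝ) < x := hx
      simp only [gr, Pi.zero_apply]; positivity
    · exact (gr_meas l a b).aestronglyMeasurable
  rw [e, ENNReal.ofReal_inv_of_pos (ENNReal.toReal_pos h0 h1), ENNReal.ofReal_toReal h1]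

/-- open quadrant -/
def QQ : Set (ℝ × ℝ) := Ioi (0:ℝ) ×ˢ Ioi (0:ℝ)

lemma QQ_meas : MeasurableSet QQ := measurableSet_Ioi.prod measurableSet_Ioi

lemma F1_meas (α β : ℝ) : Measurable (F1 α β) := by
  unfold F1; fun_prop

lemma F1_maps {α β : ℝ} (hα : 0 ≤ α) (hβ : 0 ≤ β) {p : ℝ × ℝ} (hp : p ∈ QQ) : F1 α β p ∈ QQ := by
  obtain ⟨x, y⟩ := p
  obtain ⟨hx, hy⟩ := hp
  simp only [mem_Ioi] at hx hy
  refine ⟨?_, ?_⟩ <;> simp only [F1, mem_Ioi] <;> positivity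

lemma F1_mul {α β : ℝ} (hα : 0 ≤ α) (hβ : 0 ≤ β) {x y : ℝ} (hx : 0 < x) (hy : 0 < y) :
    (F1 α β (x, y)).1 * (F1 α β (x, y)).2 = x * y := by
  have h1 : 0 < 1 + α * x * y := by positivity
  have h2 : 0 < 1 + β * x * y := by positivity
  simp only [F1]; field_simp

lemma F1_inv {α β : ℝ} (hα : 0 ≤ α) (hβ : 0 ≤ β) {p : ℝ × ℝ} (hp : p ∈ QQ) :
    F1 α β (F1 α β p) = p := by
  obtain ⟨x, y⟩ := p
  obtain ⟨hx, hy⟩ := hp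
  simp only [mem_Ioi] at hx hy
  have h1 : 0 < 1 + α * x * y := by positivity
  have h2 : 0 < 1 + β * x * y := by positivity
  have hm := F1_mul hα hβ hx hy
  have e : F1 α β (F1 α β (x, y)) =
      ((F1 α β (x, y)).2 * (1 + β * (x * y)) / (1 + α * (x * y)),
       (F1 α β (x, y)).1 * (1 + α * (x * y)) / (1 + β * (x * y))) := by
    rw [← hm]
    simp only [F1, mul_assoc]
  rw [e]
  rw [mul_assoc] at h1 h2
  ext <;> simp only [F1, mul_assoc] <;> field_simp

/-- derivative -/
noncomputable def DF (α β : ℝ) (p : ℝ × ℝ) : ℝ × ℝ →L[ℝ] ℝ × ℝ :=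
  (Matrix.toLin (.finTwoProd ℝ) (.finTwoProd ℝ)
    !![p.2 ^ 2 * (β - α) / (1 + α * p.1 * p.2) ^ 2,
       p.1 * p.2 * (β - α) / (1 + α * p.1 * p.2) ^ 2 + (1 + β * p.1 * p.2) / (1 + α * p.1 * p.2);
       p.1 * p.2 * (α - β) / (1 + β * p.1 * p.2) ^ 2 + (1 + α * p.1 * p.2) / (1 + β * p.1 * p.2),
       p.1 ^ 2 * (α - β) / (1 + β * p.1 * p.2) ^ 2]).toContinuousLinearMap

lemma DF_det {α β : ℝ} (hα : 0 ≤ α) (hβ : 0 ≤ β) {p : ℝ × ℝ} (hp : p ∈ QQ) :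
    (DF α β p).det = -1 := by
  obtain ⟨x, y⟩ := p
  obtain ⟨hx, hy⟩ := hp
  simp only [mem_Ioi] at hx hy
  have h1 : 0 < 1 + α * x * y := by positivity
  have h2 : 0 < 1 + β * x * y := by positivity
  unfold DF
  simp only [LinearMap.det_toContinuousLinearMap, LinearMap.det_toLin, Matrix.det_fin_two_of]
  field_simp
  ring

lemma DF_has {α β : ℝ} (hα : 0 ≤ α) (hβ : 0 ≤ β) {p : ℝ × ℝ} (hp : p ∈ QQ) :
    HasFDerivAt (F1 α β) (DF α β p) p := by
  obtain ⟨x, y⟩ := p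
  obtain ⟨hx, hy⟩ := hp
  simp only [mem_Ioi] at hx hy
  have h1 : 0 < 1 + α * x * y := by positivity
  have h2 : 0 < 1 + β * x * y := by positivity
  have f1 : HasFDerivAt (fun p : ℝ × ℝ => p.1) (ContinuousLinearMap.fst ℝ ℝ ℝ) (x, y) :=
    hasFDerivAt_fst
  have f2 : HasFDerivAt (fun p : ℝ × ℝ => p.2) (ContinuousLinearMap.snd ℝ ℝ ℝ) (x, y) :=
    hasFDerivAt_snd
  have A := ((f1.const_mul α).mul f2).const_add 1
  have B := ((f1.const_mul β).mul f2).const_add 1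
  have iA := (hasDerivAt_inv h1.ne').comp_hasFDerivAt (x, y) A
  have iB := (hasDerivAt_inv h2.ne').comp_hasFDerivAt (x, y) B
  have H := ((f2.mul B).mul iA).prodMk ((f1.mul A).mul iB)
  unfold DF
  rw [Matrix.toLin_finTwoProd_toContinuousLinearMap]
  have H2 : HasFDerivAt (F1 α β) _ (x, y) := H
  refine H2.congr_fderiv ?_
  ext <;> simp <;> field_simp <;> ring

lemma F1_map_vol {α β : ℝ} (hα : 0 ≤ α) (hβ : 0 ≤ β) :
    Measure.map (F1 α β) ((volume : Measure (ℝ × ℝ)).restrict QQ) = volume.restrict QQ := by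
  have inj : InjOn (F1 α β) QQ := fun p hp q hq h => by
    rw [← F1_inv hα hβ hp, h, F1_inv hα hβ hq]
  have im : F1 α β '' QQ = QQ := by
    ext p; constructor
    · rintro ⟨q, hq, rfl⟩; exact F1_maps hα hβ hq
    · intro hp; exact ⟨_, F1_maps hα hβ hp, F1_inv hα hβ hp⟩
  have := map_withDensity_abs_det_fderiv_eq_addHaar (volume : Measure (ℝ × ℝ))
    QQ_meas.nullMeasurableSet (fun p hp => (DF_has hα hβ hp).hasFDerivWithinAt) inj
  rw [im] at this
  have e : (fun x => ENNReal.ofReal |(DF α β x).det|) =ᵐ[volume.restrict QQ] 1 := by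
    filter_upwards [ae_restrict_mem QQ_meas] with p hp
    simp [DF_det hα hβ hp]
  rwa [withDensity_congr_ae e, withDensity_one] at this

lemma gm_prod (l a b a' b' : ℝ) : (gm l a b).prod (gm l a' b') =
    ((volume : Measure (ℝ × ℝ)).restrict QQ).withDensity
      (fun z => ENNReal.ofReal (gr l a b z.1) * ENNReal.ofReal (gr l a' b' z.2)) := by
  unfold gm
  rw [prod_withDensity (gr_meas _ _ _).ennreal_ofReal (gr_meas _ _ _).ennreal_ofReal,
    Measure.prod_restrict]
  rfl

lemma dens_eq {α β : ℝ} (hα : 0 ≤ α) (hβ : 0 ≤ β) (l c1 c2 : ℝ) {p : ℝ × ℝ} (hp : p ∈ QQ) :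
    gr l (c1 * α) c2 p.1 * gr l (c2 * β) c1 p.2 =
      gr l (c2 * α) c1 (F1 α β p).1 * gr l (c1 * β) c2 (F1 α β p).2 := by
  have hq := F1_maps hα hβ hp
  obtain ⟨x, y⟩ := p
  obtain ⟨hx, hy⟩ := hp
  simp only [mem_Ioi] at hx hy
  have hu : 0 < (F1 α β (x, y)).1 := hq.1
  have hv : 0 < (F1 α β (x, y)).2 := hq.2
  have h1 : 0 < 1 + α * x * y := by positivity
  have h2 : 0 < 1 + β * x * y := by positivity
  have hm := F1_mul hα hβ hx hy
  have key : ∀ s a b c d : ℝ, ∀ u v : ℝ, 0 < u → 0 < v →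
      u ^ s * Real.exp a * (v ^ s * Real.exp b) = (u * v) ^ s * Real.exp (a + b) := by
    intro s a b c d u v hu hv
    rw [Real.mul_rpow hu.le hv.le, Real.exp_add]; ring
  unfold gr
  rw [key _ _ _ 0 0 _ _ hx hy, key _ _ _ 0 0 _ _ hu hv, hm]
  congr 2
  simp only [F1]
  field_simp
  ring

lemma gm_map {α β : ℝ} (hα : 0 ≤ α) (hβ : 0 ≤ β) (l c1 c2 : ℝ) :
    Measure.map (F1 α β) ((gm l (c1 * α) c2).prod (gm l (c2 * β) c1)) =
      (gm l (c2 * α) c1).prod (gm l (c1 * β) c2) := by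
  have pos : ∀ a b x, 0 < x → 0 ≤ gr l a b x := fun a b x hx => by unfold gr; positivity
  rw [gm_prod, gm_prod]
  set g : ℝ × ℝ → ℝ≥0∞ := fun z =>
    ENNReal.ofReal (gr l (c2 * α) c1 z.1) * ENNReal.ofReal (gr l (c1 * β) c2 z.2) with hg
  have gmeas : Measurable g :=
    ((gr_meas _ _ _).comp measurable_fst).ennreal_ofReal.mul
      ((gr_meas _ _ _).comp measurable_snd).ennreal_ofReal
  have e : (fun z : ℝ × ℝ => ENNReal.ofReal (gr l (c1 * α) c2 z.1) *
      ENNReal.ofReal (gr l (c2 * β) c1 z.2)) =ᵐ[volume.restrict QQ] g ∘ F1 α β := by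
    filter_upwards [ae_restrict_mem QQ_meas] with p hp
    simp only [hg, Function.comp_apply]
    rw [← ENNReal.ofReal_mul (pos _ _ _ hp.1),
      ← ENNReal.ofReal_mul (pos _ _ _ (F1_maps hα hβ hp).1), dens_eq hα hβ l c1 c2 hp]
  rw [withDensity_congr_ae e]
  ext s hs
  rw [Measure.map_apply (F1_meas α β) hs, withDensity_apply _ (F1_meas α β hs),
    withDensity_apply _ hs]
  conv_rhs => rw [← F1_map_vol hα hβ]
  rw [setLIntegral_map hs gmeas (F1_meas α β)]
  rfl

theorem gig_if_part
    {Ω : Type*} [MeasureSpace Ω] [IsProbabilityMeasure (ℙ : Measure Ω)]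
    (α β : ℝ) (hα : 0 ≤ α) (hβ : 0 ≤ β) (hαβ : α ≠ β)
    (X Y : Ω → ℝ) (hXm : Measurable X) (hYm : Measurable Y)
    (hXpos : ∀ ω, 0 < X ω) (hYpos : ∀ ω, 0 < Y ω)
    (hIndep : IndepFun X Y ℙ)
    (l c1 c2 : ℝ) (hc1 : 0 < c1) (hc2 : 0 < c2)
    (hX : Measure.map X ℙ =
      volume.withDensity (fun x => ENNReal.ofReal (gigPdf l (c1 * α) c2 x)))
    (hY : Measure.map Y ℙ =
      volume.withDensity (fun x => ENNReal.ofReal (gigPdf l (c2 * β) c1 x))) :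
    IndepFun (fun ω => (F1 α β (X ω, Y ω)).1) (fun ω => (F1 α β (X ω, Y ω)).2) ℙ ∧
      Measure.map (fun ω => (F1 α β (X ω, Y ω)).1) ℙ =
        volume.withDensity (fun x => ENNReal.ofReal (gigPdf l (c2 * α) c1 x)) ∧
      Measure.map (fun ω => (F1 α β (X ω, Y ω)).2) ℙ =
        volume.withDensity (fun x => ENNReal.ofReal (gigPdf l (c1 * β) c2 x)) := by
  have hFm := F1_meas α β
  have hUm : Measurable (fun ω => (F1 α β (X ω, Y ω)).1) :=
    (hFm.comp (hXm.prodMk hYm)).fst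
  have hVm : Measurable (fun ω => (F1 α β (X ω, Y ω)).2) :=
    (hFm.comp (hXm.prodMk hYm)).snd
  have hXY := (indepFun_iff_map_prod_eq_prod_map_map hXm.aemeasurable hYm.aemeasurable).1 hIndep
  rw [hX, hY, pdf_eq, pdf_eq, Measure.prod_smul_left, Measure.prod_smul_right, smul_smul] at hXY
  set K : ℝ≥0∞ := ENNReal.ofReal (∫ t in Ioi (0:ℝ), gr l (c1 * α) c2 t)⁻¹ *
    ENNReal.ofReal (∫ t in Ioi (0:ℝ), gr l (c2 * β) c1 t)⁻¹ with hK
  have hUV : Measure.map (fun ω => ((F1 α β (X ω, Y ω)).1, (F1 α β (X ω, Y ω)).2)) ℙ =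
      K • (gm l (c2 * α) c1).prod (gm l (c1 * β) c2) := by
    rw [← gm_map hα hβ, ← Measure.map_smul, ← hXY, Measure.map_map hFm (hXm.prodMk hYm)]
    rfl
  set m1 := gm l (c2 * α) c1 with hm1
  set m2 := gm l (c1 * β) c2 with hm2
  have hone : K * (m1 univ * m2 univ) = 1 := by
    have h : Measure.map (fun ω => ((F1 α β (X ω, Y ω)).1, (F1 α β (X ω, Y ω)).2)) ℙ univ = 1 := by
      rw [Measure.map_apply (hUm.prodMk hVm) MeasurableSet.univ]; simp
    rw [hUV, Measure.smul_apply, ← univ_prod_univ, Measure.prod_prod, smul_eq_mul] at h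
    exact h
  have hK0 : K ≠ 0 := by rintro h; simp [h] at hone
  have h10 : m1 univ ≠ 0 := by intro h; simp [h] at hone
  have h20 : m2 univ ≠ 0 := by intro h; simp [h] at hone
  have h1t : m1 univ ≠ ∞ := by
    intro h; rw [h, ENNReal.top_mul h20, ENNReal.mul_top hK0] at hone; simp at hone
  have h2t : m2 univ ≠ ∞ := by
    intro h; rw [h, ENNReal.mul_top h10, ENNReal.mul_top hK0] at hone; simp at hone
  have e1 : K * m2 univ = (m1 univ)⁻¹ :=
    ENNReal.eq_inv_of_mul_eq_one_left (by rw [← hone]; ring)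
  have e2 : K * m1 univ = (m2 univ)⁻¹ :=
    ENNReal.eq_inv_of_mul_eq_one_left (by rw [← hone]; ring)
  have hU : Measure.map (fun ω => (F1 α β (X ω, Y ω)).1) ℙ = (m1 univ)⁻¹ • m1 := by
    have : Measure.map (fun ω => (F1 α β (X ω, Y ω)).1) ℙ = Measure.map Prod.fst
        (Measure.map (fun ω => ((F1 α β (X ω, Y ω)).1, (F1 α β (X ω, Y ω)).2)) ℙ) := by
      rw [Measure.map_map measurable_fst (hUm.prodMk hVm)]; rfl
    rw [this, hUV, Measure.map_smul, Measure.map_fst_prod, smul_smul, e1]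
  have hV : Measure.map (fun ω => (F1 α β (X ω, Y ω)).2) ℙ = (m2 univ)⁻¹ • m2 := by
    have : Measure.map (fun ω => (F1 α β (X ω, Y ω)).2) ℙ = Measure.map Prod.snd
        (Measure.map (fun ω => ((F1 α β (X ω, Y ω)).1, (F1 α β (X ω, Y ω)).2)) ℙ) := by
      rw [Measure.map_map measurable_snd (hUm.prodMk hVm)]; rfl
    rw [this, hUV, Measure.map_smul, Measure.map_snd_prod, smul_smul, e2]
  refine ⟨?_, ?_, ?_⟩
  · rw [indepFun_iff_map_prod_eq_prod_map_map hUm.aemeasurable hVm.aemeasurable, hUV, hU, hV,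
      Measure.prod_smul_left, Measure.prod_smul_right, smul_smul]
    congr 1
    rw [← e2, mul_comm K, ← mul_assoc, ENNReal.inv_mul_cancel h10 h1t, one_mul]
  · rw [hU, pdf_eq' _ _ _ h10 h1t]
  · rw [hV, pdf_eq' _ _ _ h20 h2t]
end

section
/- Let c₁, c₂ > 0 and let F₃(x,y) = (min{−x,y}, y + x − min{−x,y}). Let X and Y be ℝ-valued independent random variables with densities f_X and f_Y satisfying: f_X > 0 exactly on [−c₁, c₂], f_Y > 0 exactly on [−c₂, ∞), both twice-differentiable in the interior of their supports. Set (U,V) := F₃(X,Y), and suppose U and V are independent and that (U,V) has the same distribution as (X,Y). Then there exist λ > 0 and c > 0 such that X ~ stExp(λ, −c, c) and Y ~ sExp(λ, −c). -/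
open MeasureTheory ProbabilityTheory Set

/-- Density of the shifted exponential distribution sExp(l, c):
`(1/Z) e^{-l x} 1_{[c,∞)}(x)` with `Z = (1/l) e^{-l c}`. -/
noncomputable def sExpPdf (l c : ℝ) : ℝ → ℝ := fun x =>
  if c ≤ x then Real.exp (-(l * x)) / ((1 / l) * Real.exp (-(l * c))) else 0

/-- Density of the shifted truncated exponential distribution stExp(l, c1, c2):
`(1/Z) e^{-l x} 1_{[c1,c2]}(x)` with `Z = (1/l)(e^{-l c1} - e^{-l c2})`. -/
noncomputable def stExpPdf (l c1 c2 : ℝ) : ℝ → ℝ := fun x =>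
  if c1 ≤ x ∧ x ≤ c2 then
    Real.exp (-(l * x)) / ((1 / l) * (Real.exp (-(l * c1)) - Real.exp (-(l * c2))))
  else 0

/-- The transformation F₃. -/
noncomputable def F3 : ℝ × ℝ → ℝ × ℝ := fun p =>
  (min (-p.1) p.2, p.2 + p.1 - min (-p.1) p.2)

lemma aux_analytic (c : ℝ) (hc : 0 < c) (f g : ℝ → ℝ)
    (hf : ∀ x, -c < x → x < c → 0 < f x) (hg : ∀ y, -c < y → 0 < g y)
    (hd : ∀ y, -c < y → DifferentiableAt ℝ g y)
    (E1 : ∀ u v, -c < u → u < c → -c < v → 0 < u + v → f u * g v = f (-u) * g (v + 2 * u))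
    (E2 : ∀ u v, -c < u → u < c → -c < v → v < c → u + v < 0 → f u * g v = f v * g u) :
    ∃ l K M : ℝ, 0 < K ∧ 0 < M ∧ (∀ y, -c < y → g y = K * Real.exp (-(l * y))) ∧
      (∀ x, -c < x → x < c → f x = M * Real.exp (-(l * x))) := by
  have hq : ∀ a b, -c < a → -c < b → 0 < a + b → b - a < 2 * c → a - b < 2 * c →
      deriv g a / g a = deriv g b / g b := by
    intro a b ha hb hab h1 h2
    set u := (b - a) / 2 with hu
    have hb' : b = a + 2 * u := by rw [hu]; ring
    have hu1 : -c < u := by rw [hu]; linarith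
    have hu2 : u < c := by rw [hu]; linarith
    have hua : 0 < u + a := by rw [hu]; linarith
    have e0 := E1 u a hu1 hu2 ha hua
    rw [← hb'] at e0
    have hev : (fun v => f u * g v) =ᶠ[nhds a] (fun v => f (-u) * g (v + 2 * u)) := by
      have : ∀ᶠ v in nhds a, -c < v ∧ -u < v :=
        (lt_mem_nhds ha).and (lt_mem_nhds (by linarith))
      filter_upwards [this] with v hv
      exact E1 u v hu1 hu2 hv.1 (by linarith [hv.2])
    have d1 : HasDerivAt (fun v => f u * g v) (f u * deriv g a) a :=
      (hd a ha).hasDerivAt.const_mul _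
    have d2 : HasDerivAt (fun v => f (-u) * g (v + 2 * u)) (f (-u) * deriv g b) a := by
      have := (hd b hb).hasDerivAt
      rw [hb'] at this
      have := (this.comp_add_const a (2 * u)).const_mul (f (-u))
      rwa [← hb'] at this
    have e1 := (d1.congr_of_eventuallyEq hev.symm).unique d2
    have hfu := hf u hu1 hu2
    rw [div_eq_div_iff (hg a ha).ne' (hg b hb).ne']
    have : f u * (deriv g a * g b) = f u * (deriv g b * g a) := by
      calc f u * (deriv g a * g b) = (f u * deriv g a) * g b := by ring
        _ = (f (-u) * g b) * deriv g b := by rw [e1]; ring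
        _ = _ := by rw [← e0]; ring
    exact mul_left_cancel₀ hfu.ne' this
  set q : ℝ → ℝ := fun y => deriv g y / g y with hqdef
  have hloc : ∀ a, 0 < a → q =ᶠ[nhds a] fun _ => q a := by
    intro a ha
    have : ∀ᶠ v in nhds a, 0 < v ∧ a - c < v ∧ v < a + c :=
      (lt_mem_nhds ha).and ((lt_mem_nhds (by linarith)).and (gt_mem_nhds (by linarith)))
    filter_upwards [this] with v hv
    obtain ⟨h1, h2, h3⟩ := hv
    exact hq v a (by linarith) (by linarith) (by linarith) (by linarith) (by linarith)
  have hqpos : ∀ a, 0 < a → q a = q 1 := by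
    intro a ha
    refine isOpen_Ioi.is_const_of_deriv_eq_zero (s := Ioi (0:ℝ)) isPreconnected_Ioi ?_ ?_
      (mem_Ioi.2 ha) (mem_Ioi.2 one_pos)
    · intro x hx
      exact ((differentiableAt_const (q x)).congr_of_eventuallyEq (hloc x hx)).differentiableWithinAt
    · intro x hx
      rw [(hloc x hx).deriv_eq]; simp
  have hqall : ∀ a, -c < a → q a = q 1 := by
    intro a ha
    rcases lt_or_ge 0 a with h | h
    · exact hqpos a h
    · rw [← hqpos c hc]
      by_cases h2 : c - a < 2 * c
      · exact hq a c ha (by linarith) (by linarith) h2 (by linarith)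
      · linarith
  set l := - q 1 with hl
  have hconst : ∀ y, -c < y → g y * Real.exp (l * y) = g 0 * Real.exp (l * 0) := by
    intro y hy
    have hD : ∀ x, -c < x → HasDerivAt (fun y => g y * Real.exp (l * y)) 0 x := by
      intro x hx
      have h1 := (hd x hx).hasDerivAt
      have h2 : HasDerivAt (fun y => Real.exp (l * y)) (Real.exp (l * x) * (l * 1)) x :=
        ((hasDerivAt_id x).const_mul l).exp
      have h3 := h1.mul h2
      have h4 : deriv g x = -l * g x := by
        have := hqall x hx
        rw [hqdef] at this
        simp only at this
        rw [div_eq_iff (hg x hx).ne'] at this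
        rw [this, hl]; simp [hqdef]
      have h5 : deriv g x * Real.exp (l * x) + g x * (Real.exp (l * x) * (l * 1)) = 0 := by
        rw [h4]; ring
      rw [h5] at h3
      exact h3
    refine isOpen_Ioi.is_const_of_deriv_eq_zero (s := Ioi (-c)) isPreconnected_Ioi ?_ ?_
      (f := fun y => g y * Real.exp (l * y)) (mem_Ioi.2 hy) (mem_Ioi.2 (by linarith))
    · intro x hx
      exact (hD x hx).differentiableAt.differentiableWithinAt
    · intro x hx
      exact (hD x hx).deriv
  have hg0 := hg 0 (by linarith)
  have hf0 := hf 0 (by linarith) hc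
  have hgf : ∀ y, -c < y → g y = g 0 * Real.exp (-(l * y)) := by
    intro y hy
    have := hconst y hy
    rw [Real.exp_neg, ← div_eq_mul_inv, eq_div_iff (Real.exp_pos _).ne', this]
    simp
  refine ⟨l, g 0, f 0, hg0, hf0, hgf, ?_⟩
  intro x hx1 hx2
  obtain ⟨v, hv1, hv2⟩ : ∃ v, -c < v ∧ v < min 0 (-x) :=
    exists_between (by rw [lt_min_iff]; constructor <;> linarith)
  rw [lt_min_iff] at hv2
  have a1 := E2 x v hx1 hx2 hv1 (by linarith) (by linarith)
  have a2 := E2 0 v (by linarith) hc hv1 (by linarith) (by linarith)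
  have hgv := hg v hv1
  rw [hgf x hx1] at a1
  refine mul_right_cancel₀ hgv.ne' ?_
  calc f x * g v = (f v * g 0) * Real.exp (-(l*x)) := by rw [a1]; ring
    _ = _ := by rw [← a2]; ring

lemma aux_ae (d : ℝ × ℝ → ℝ) (hd0 : ∀ p, 0 ≤ d p) (hdm : Measurable d)
    (L : ℝ × ℝ → ℝ × ℝ) (hL : MeasurePreserving L volume volume)
    (hLL : ∀ p, L (L p) = p) (A : Set (ℝ × ℝ)) (hA : IsOpen A)
    (hF : ∀ p, F3 p ∈ A → L p ∈ A → F3 p = L p)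
    (hFA : ∀ p, F3 p ∈ A ↔ L p ∈ A)
    (hFm : Measurable F3)
    (hμ : Measure.map F3 (volume.withDensity (fun p => ENNReal.ofReal (d p))) =
      volume.withDensity (fun p => ENNReal.ofReal (d p)))
    (p : ℝ × ℝ) (hp : p ∈ A) (hc1 : ContinuousAt d p) (hc2 : ContinuousAt (fun p => d (L p)) p) :
    d p = d (L p) := by
  have hme : Measurable (fun p => ENNReal.ofReal (d p)) := hdm.ennreal_ofReal
  have hme2 : Measurable (fun p => ENNReal.ofReal (d (L p))) := (hdm.comp hL.measurable).ennreal_ofReal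
  have hae : (fun p => ENNReal.ofReal (d p)) =ᵐ[volume.restrict A]
      (fun p => ENNReal.ofReal (d (L p))) := by
    refine ae_eq_of_forall_setLIntegral_eq_of_sigmaFinite hme hme2 fun s hs _ => ?_
    rw [Measure.restrict_restrict hs]
    have hS : MeasurableSet (s ∩ A) := hs.inter hA.measurableSet
    have hpre : F3 ⁻¹' (s ∩ A) = L ⁻¹' (s ∩ A) := by
      ext x
      simp only [mem_preimage, mem_inter_iff]
      constructor
      · rintro ⟨h1, h2⟩
        have h3 := (hFA x).1 h2
        rw [← hF x h2 h3]; exact ⟨h1, h2⟩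
      · rintro ⟨h1, h2⟩
        have h3 := (hFA x).2 h2
        rw [hF x h3 h2]; exact ⟨h1, h2⟩
    have h1 : Measure.map F3 (volume.withDensity (fun p => ENNReal.ofReal (d p))) (s ∩ A) =
      volume.withDensity (fun p => ENNReal.ofReal (d p)) (s ∩ A) := by rw [hμ]
    rw [Measure.map_apply hFm hS, hpre, withDensity_apply _ hS,
      withDensity_apply _ (hL.measurable hS)] at h1
    rw [← h1, ← hL.setLIntegral_comp_preimage hS hme2]
    simp only [hLL]
  rw [Filter.EventuallyEq, ae_restrict_iff' hA.measurableSet] at hae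
  have hfr : ∃ᶠ x in nhds p, d x = d (L x) := by
    intro hcon
    have h2 := (hcon.and (hA.mem_nhds hp))
    obtain ⟨O, hO, hOo, hpO⟩ := eventually_nhds_iff.1 h2
    have hpos : 0 < volume O := hOo.measure_pos _ ⟨p, hpO⟩
    have : volume O = 0 := by
      refine measure_mono_null ?_ (ae_iff.1 hae)
      intro x hx hx2
      have := hO x hx
      apply this.1
      have h3 := hx2 this.2
      rwa [ENNReal.ofReal_eq_ofReal_iff (hd0 _) (hd0 _)] at h3
    exact hpos.ne' this
  have := isClosed_diagonal.mem_of_frequently_of_tendsto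
    (f := fun x => (d x, d (L x))) (b := nhds p) (by simpa using hfr) (hc1.prodMk_nhds hc2)
  simpa using this

lemma aux_toReal (s : Set ℝ) (hs : MeasurableSet s) (l M : ℝ) (hM : 0 < M)
    (h : ∫⁻ x in s, ENNReal.ofReal (M * Real.exp (-(l * x))) = 1) :
    M * ∫ x in s, Real.exp (-l * x) = 1 := by
  have h2 : ∫ x in s, M * Real.exp (-(l * x)) = 1 := by
    rw [integral_eq_lintegral_of_nonneg_ae, h]
    · simp
    · exact Filter.Eventually.of_forall fun x => by positivity
    · exact (by fun_prop : Continuous fun x : ℝ => M * Real.exp (-(l * x))).aestronglyMeasurable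
  rw [← h2, integral_const_mul]
  simp

lemma aux_lpos (c l K : ℝ) (hc : 0 < c) (hK : 0 < K)
    (h : ∫⁻ x in Ioi (-c), ENNReal.ofReal (K * Real.exp (-(l * x))) = 1) : 0 < l := by
  by_contra hl
  push Not at hl
  have h1 : ∫⁻ x in Ioi (0:ℝ), ENNReal.ofReal K ≤
      ∫⁻ x in Ioi (-c), ENNReal.ofReal (K * Real.exp (-(l * x))) := by
    refine le_trans (setLIntegral_mono' measurableSet_Ioi (g := fun x => ENNReal.ofReal (K * Real.exp (-(l * x)))) ?_)
      (lintegral_mono_set (Ioi_subset_Ioi (by linarith)))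
    intro x hx
    apply ENNReal.ofReal_le_ofReal
    have : 1 ≤ Real.exp (-(l * x)) := by
      apply Real.one_le_exp
      nlinarith [mem_Ioi.1 hx]
    nlinarith
  rw [h] at h1
  simp [hK] at h1

lemma aux_normY (c l K : ℝ) (hc : 0 < c) (hK : 0 < K) (hl : 0 < l)
    (h : ∫⁻ x in Ioi (-c), ENNReal.ofReal (K * Real.exp (-(l * x))) = 1) (y : ℝ) :
    K * Real.exp (-(l * y)) = Real.exp (-(l * y)) / ((1 / l) * Real.exp (-(l * -c))) := by
  have h1 := aux_toReal _ measurableSet_Ioi l K hK h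
  rw [integral_exp_mul_Ioi (by linarith)] at h1
  have h2 : K * ((1 / l) * Real.exp (-(l * -c))) = 1 := by
    refine Eq.trans ?_ h1
    rw [show -(l * -c) = -l * -c by ring, neg_div_neg_eq]
    ring
  rw [eq_div_iff (by positivity)]
  linear_combination Real.exp (-(l * y)) * h2

lemma aux_normX (c l K : ℝ) (hc : 0 < c) (hK : 0 < K) (hl : 0 < l)
    (h : ∫⁻ x in Ioo (-c) c, ENNReal.ofReal (K * Real.exp (-(l * x))) = 1) (y : ℝ) :
    K * Real.exp (-(l * y)) = Real.exp (-(l * y)) /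
      ((1 / l) * (Real.exp (-(l * -c)) - Real.exp (-(l * c)))) := by
  have h1 := aux_toReal _ measurableSet_Ioo l K hK h
  rw [← integral_Ioc_eq_integral_Ioo, ← intervalIntegral.integral_of_le (by linarith),
    intervalIntegral.integral_comp_mul_left (fun x => Real.exp x) (by linarith : -l ≠ 0),
    integral_exp] at h1
  have h2 : K * ((1 / l) * (Real.exp (-(l * -c)) - Real.exp (-(l * c)))) = 1 := by
    refine Eq.trans ?_ h1
    rw [show -(l * -c) = -l * -c by ring, show -(l * c) = -l * c by ring]
    rw [smul_eq_mul, inv_neg]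
    ring
  have h3 : ((1 / l) * (Real.exp (-(l * -c)) - Real.exp (-(l * c)))) ≠ 0 := by
    intro h0
    rw [h0] at h2
    simp at h2
  rw [eq_div_iff h3]
  linear_combination Real.exp (-(l * y)) * h2

lemma aux_indicator_continuousAt (s : Set ℝ) (f : ℝ → ℝ)
    (hf : ∀ x ∈ interior s, ContinuousAt f x) (x : ℝ) (hx : x ∉ frontier s) :
    ContinuousAt (s.indicator f) x := by
  by_cases h : x ∈ interior s
  · refine (hf x h).congr ?_
    filter_upwards [isOpen_interior.mem_nhds h] with y hy
    rw [indicator_of_mem (interior_subset hy)]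
  · have h2 : x ∉ closure s := fun h3 => hx ⟨h3, h⟩
    refine (continuousAt_const (y := (0:ℝ))).congr ?_
    filter_upwards [isClosed_closure.isOpen_compl.mem_nhds h2] with y hy
    rw [indicator_of_notMem (fun h4 => hy (subset_closure h4))]

lemma aux_mul_contAt (f g : ℝ → ℝ) (a b : ℝ × ℝ → ℝ) (ha : Continuous a) (hb : Continuous b)
    (p : ℝ × ℝ) (hf : ContinuousAt f (a p)) (hg : ContinuousAt g (b p)) :
    ContinuousAt (fun p => f (a p) * g (b p)) p :=
  (ContinuousAt.comp (f := a) hf ha.continuousAt).mul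
    (ContinuousAt.comp (f := b) hg hb.continuousAt)

lemma aux_L1 : MeasurePreserving (fun p : ℝ × ℝ => (-p.1, p.2 + 2 * p.1)) volume volume := by
  refine (Measure.measurePreserving_neg (volume : Measure ℝ)).skew_product
    (g := fun x y => y + 2 * x) (by unfold Function.uncurry; fun_prop) ?_
  exact Filter.Eventually.of_forall fun x => (measurePreserving_add_right volume (2 * x)).map_eq

theorem sExp_stationary_characterization
    {Ω : Type*} [MeasureSpace Ω] [IsProbabilityMeasure (ℙ : Measure Ω)]
    (c₁ c₂ : ℝ) (hc₁ : 0 < c₁) (hc₂ : 0 < c₂)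
    (X Y : Ω → ℝ) (hXm : Measurable X) (hYm : Measurable Y)
    (hIndep : IndepFun X Y ℙ)
    (fX fY : ℝ → ℝ)
    (hfX : Measure.map X ℙ = volume.withDensity (fun x => ENNReal.ofReal (fX x)))
    (hfY : Measure.map Y ℙ = volume.withDensity (fun x => ENNReal.ofReal (fY x)))
    (hfXpos : ∀ x, 0 < fX x ↔ x ∈ Icc (-c₁) c₂)
    (hfYpos : ∀ y, 0 < fY y ↔ y ∈ Ici (-c₂))
    (hfXzero : ∀ x ∉ Icc (-c₁) c₂, fX x = 0)
    (hfYzero : ∀ y ∉ Ici (-c₂), fY y = 0)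
    (hfXdiff : ∀ x ∈ Ioo (-c₁) c₂,
      DifferentiableAt ℝ fX x ∧ DifferentiableAt ℝ (deriv fX) x)
    (hfYdiff : ∀ y ∈ Ioi (-c₂),
      DifferentiableAt ℝ fY y ∧ DifferentiableAt ℝ (deriv fY) y)
    (hUVindep :
      IndepFun (fun ω => (F3 (X ω, Y ω)).1) (fun ω => (F3 (X ω, Y ω)).2) ℙ)
    (hSameDist :
      Measure.map (fun ω => F3 (X ω, Y ω)) ℙ = Measure.map (fun ω => (X ω, Y ω)) ℙ) :
    ∃ (l c : ℝ), 0 < l ∧ 0 < c ∧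
      Measure.map X ℙ =
        volume.withDensity (fun x => ENNReal.ofReal (stExpPdf l (-c) c x)) ∧
      Measure.map Y ℙ =
        volume.withDensity (fun y => ENNReal.ofReal (sExpPdf l (-c) y)) := by
  set f : ℝ → ℝ := (Ioo (-c₁) c₂).indicator fX with hfdef
  set g : ℝ → ℝ := (Ioi (-c₂)).indicator fY with hgdef
  have hfXc : ∀ x ∈ Ioo (-c₁) c₂, ContinuousAt fX x := fun x hx => (hfXdiff x hx).1.continuousAt
  have hfYc : ∀ x ∈ Ioi (-c₂), ContinuousAt fY x := fun x hx => (hfYdiff x hx).1.continuousAt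
  have hfm : Measurable f := by
    rw [hfdef, ← piecewise_eq_indicator]
    exact ContinuousOn.measurable_piecewise
      (fun x hx => (hfXc x hx).continuousWithinAt) continuousOn_const measurableSet_Ioo
  have hgm : Measurable g := by
    rw [hgdef, ← piecewise_eq_indicator]
    exact ContinuousOn.measurable_piecewise
      (fun x hx => (hfYc x hx).continuousWithinAt) continuousOn_const measurableSet_Ioi
  have hfc : ∀ x, x ≠ -c₁ → x ≠ c₂ → ContinuousAt f x := by
    intro x h1 h2
    refine aux_indicator_continuousAt _ _ (by simpa using hfXc) x ?_
    rw [frontier_Ioo (by linarith)]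
    simp [h1, h2]
  have hgc : ∀ x, x ≠ -c₂ → ContinuousAt g x := by
    intro x h1
    refine aux_indicator_continuousAt _ _ (by simpa using hfYc) x ?_
    rw [frontier_Ioi]
    simpa using h1
  have hf_eq : ∀ x, -c₁ < x → x < c₂ → f x = fX x := fun x h1 h2 => by
    rw [hfdef, indicator_of_mem (show x ∈ Ioo (-c₁) c₂ from ⟨h1, h2⟩)]
  have hg_eq : ∀ x, -c₂ < x → g x = fY x := fun x h1 => by
    rw [hgdef, indicator_of_mem (show x ∈ Ioi (-c₂) from h1)]
  have hfpos : ∀ x, -c₁ < x → x < c₂ → 0 < f x := fun x h1 h2 => by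
    rw [hf_eq x h1 h2, hfXpos]; exact ⟨h1.le, h2.le⟩
  have hgpos : ∀ x, -c₂ < x → 0 < g x := fun x h1 => by
    rw [hg_eq x h1, hfYpos]; exact h1.le
  have hf0 : ∀ x, 0 ≤ f x := fun x => by
    by_cases h : x ∈ Ioo (-c₁) c₂
    · exact (hfpos x h.1 h.2).le
    · rw [hfdef, indicator_of_notMem h]
  have hg0 : ∀ x, 0 ≤ g x := fun x => by
    by_cases h : x ∈ Ioi (-c₂)
    · exact (hgpos x h).le
    · rw [hgdef, indicator_of_notMem h]
  have hX : Measure.map X ℙ = volume.withDensity (fun x => ENNReal.ofReal (f x)) := by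
    rw [hfX]
    refine withDensity_congr_ae ?_
    have h1 : ∀ᵐ x : ℝ, x ≠ -c₁ := by simp [ae_iff]
    have h2 : ∀ᵐ x : ℝ, x ≠ c₂ := by simp [ae_iff]
    filter_upwards [h1, h2] with x h1 h2
    by_cases h : x ∈ Ioo (-c₁) c₂
    · rw [hf_eq x h.1 h.2]
    · rw [hfdef, indicator_of_notMem h, hfXzero]
      intro h3
      exact h ⟨lt_of_le_of_ne h3.1 h1.symm, lt_of_le_of_ne h3.2 h2⟩
  have hY : Measure.map Y ℙ = volume.withDensity (fun x => ENNReal.ofReal (g x)) := by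
    rw [hfY]
    refine withDensity_congr_ae ?_
    have h1 : ∀ᵐ x : ℝ, x ≠ -c₂ := by simp [ae_iff]
    filter_upwards [h1] with x h1
    by_cases h : x ∈ Ioi (-c₂)
    · rw [hg_eq x h]
    · rw [hgdef, indicator_of_notMem h, hfYzero]
      intro h3
      exact h (lt_of_le_of_ne h3 h1.symm)
  have hFm : Measurable F3 := by unfold F3; fun_prop
  have hXY : Measure.map (fun ω => (X ω, Y ω)) ℙ =
      volume.withDensity (fun p : ℝ × ℝ => ENNReal.ofReal (f p.1 * g p.2)) := by
    rw [(indepFun_iff_map_prod_eq_prod_map_map hXm.aemeasurable hYm.aemeasurable).1 hIndep, hX, hY,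
      prod_withDensity hfm.ennreal_ofReal hgm.ennreal_ofReal, Measure.volume_eq_prod]
    congr 1
    ext p
    rw [ENNReal.ofReal_mul (hf0 _)]
  have hmap : Measure.map F3 (volume.withDensity (fun p : ℝ × ℝ => ENNReal.ofReal (f p.1 * g p.2))) =
      volume.withDensity (fun p : ℝ × ℝ => ENNReal.ofReal (f p.1 * g p.2)) := by
    rw [← hXY, Measure.map_map hFm (hXm.prodMk hYm)]
    exact hSameDist
  have hdm : Measurable (fun p : ℝ × ℝ => f p.1 * g p.2) :=
    (hfm.comp measurable_fst).mul (hgm.comp measurable_snd)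
  have hd0 : ∀ p : ℝ × ℝ, 0 ≤ f p.1 * g p.2 := fun p => mul_nonneg (hf0 _) (hg0 _)
  have E1 : ∀ u v, u ≠ -c₁ → u ≠ c₂ → -u ≠ -c₁ → -u ≠ c₂ → v ≠ -c₂ → v + 2 * u ≠ -c₂ → 0 < u + v →
      f u * g v = f (-u) * g (v + 2 * u) := by
    intro u v h1 h2 h3 h4 h5 h6 h7
    refine aux_ae (fun p : ℝ × ℝ => f p.1 * g p.2) hd0 hdm
      (fun p : ℝ × ℝ => (-p.1, p.2 + 2 * p.1)) aux_L1 (fun p => by ext <;> simp)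
      {p | 0 < p.1 + p.2} (isOpen_lt (by fun_prop) (by fun_prop)) ?_ ?_ hFm hmap (u, v) h7
      (aux_mul_contAt f g _ _ (by fun_prop) (by fun_prop) _ (hfc _ h1 h2) (hgc _ h5))
      (aux_mul_contAt f g (fun p => -p.1) (fun p => p.2 + 2 * p.1) (by fun_prop) (by fun_prop) _ (hfc _ h3 h4) (hgc _ h6))
    · rintro ⟨x, y⟩ ha hb
      simp only [mem_setOf_eq] at hb
      simp only [F3]
      rw [min_eq_left (by linarith)]
      ext <;> simp; ring
    · rintro ⟨x, y⟩
      simp only [F3, mem_setOf_eq]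
      constructor <;> intro h <;> linarith
  have E2 : ∀ u v, u ≠ -c₁ → u ≠ c₂ → v ≠ -c₁ → v ≠ c₂ → v ≠ -c₂ → u ≠ -c₂ → u + v < 0 →
      f u * g v = f v * g u := by
    intro u v h1 h2 h3 h4 h5 h6 h7
    refine aux_ae (fun p : ℝ × ℝ => f p.1 * g p.2) hd0 hdm
      Prod.swap Measure.measurePreserving_swap (fun p => by simp)
      {p | p.1 + p.2 < 0} (isOpen_lt (by fun_prop) (by fun_prop)) ?_ ?_ hFm hmap (u, v) h7
      (aux_mul_contAt f g _ _ (by fun_prop) (by fun_prop) _ (hfc _ h1 h2) (hgc _ h5))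
      (aux_mul_contAt f g (fun p => p.2) (fun p => p.1) (by fun_prop) (by fun_prop) _ (hfc _ h3 h4) (hgc _ h6))
    · rintro ⟨x, y⟩ ha hb
      simp only [mem_setOf_eq, Prod.swap] at hb
      simp only [F3]
      rw [min_eq_right (by linarith)]
      ext <;> simp
    · rintro ⟨x, y⟩
      simp only [F3, mem_setOf_eq, Prod.swap]
      constructor <;> intro h <;> linarith
  have hcc : c₁ = c₂ := by
    rcases lt_trichotomy c₁ c₂ with h | h | h
    · exfalso
      have e := E1 ((c₁ + c₂) / 2) 0 (by intro; linarith) (by intro; linarith) (by intro; linarith)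
        (by intro; linarith) (by intro; linarith) (by intro; linarith) (by linarith)
      have p1 := hfpos ((c₁ + c₂) / 2) (by linarith) (by linarith)
      have p2 := hgpos 0 (by linarith)
      have z : f (-((c₁ + c₂) / 2)) = 0 := by
        rw [hfdef, indicator_of_notMem]
        intro h3
        linarith [h3.1]
      rw [z, zero_mul] at e
      exact (mul_pos p1 p2).ne' e
    · exact h
    · exfalso
      have e := E1 (-((c₁ + c₂) / 2)) (2 * (c₁ + c₂)) (by intro; linarith) (by intro; linarith)
        (by intro; linarith)
        (by intro; linarith) (by intro; linarith) (by intro; linarith) (by linarith)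
      have p1 := hfpos (-((c₁ + c₂) / 2)) (by linarith) (by linarith)
      have p2 := hgpos (2 * (c₁ + c₂)) (by linarith)
      have z : f (-(-((c₁ + c₂) / 2))) = 0 := by
        rw [hfdef, indicator_of_notMem]
        intro h3
        linarith [h3.2]
      rw [z, zero_mul] at e
      exact (mul_pos p1 p2).ne' e
  subst hcc
  have hgd : ∀ y, -c₁ < y → DifferentiableAt ℝ g y := by
    intro y hy
    refine (hfYdiff y hy).1.congr_of_eventuallyEq ?_
    filter_upwards [lt_mem_nhds hy] with x hx
    exact hg_eq x hx
  obtain ⟨l, K, M, hK, hM, hgl, hfl⟩ := aux_analytic c₁ hc₁ f g hfpos hgpos hgd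
    (by
      intro u v h1 h2 h3 h4
      apply E1 <;> first | linarith | (intro; linarith))
    (by
      intro u v h1 h2 h3 h4 h5
      apply E2 <;> first | linarith | (intro; linarith))
  have hYone : ∫⁻ x in Ioi (-c₁), ENNReal.ofReal (K * Real.exp (-(l * x))) = 1 := by
    have : IsProbabilityMeasure (Measure.map Y ℙ) := Measure.isProbabilityMeasure_map hYm.aemeasurable
    have h1 : Measure.map Y ℙ univ = 1 := measure_univ
    rw [hY, withDensity_apply _ MeasurableSet.univ, Measure.restrict_univ] at h1
    rw [← h1, ← lintegral_indicator measurableSet_Ioi]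
    congr 1
    ext x
    by_cases h : x ∈ Ioi (-c₁)
    · rw [indicator_of_mem h, hgl x h]
    · rw [indicator_of_notMem h, hgdef, indicator_of_notMem h]; simp
  have hXone : ∫⁻ x in Ioo (-c₁) c₁, ENNReal.ofReal (M * Real.exp (-(l * x))) = 1 := by
    have : IsProbabilityMeasure (Measure.map X ℙ) := Measure.isProbabilityMeasure_map hXm.aemeasurable
    have h1 : Measure.map X ℙ univ = 1 := measure_univ
    rw [hX, withDensity_apply _ MeasurableSet.univ, Measure.restrict_univ] at h1
    rw [← h1, ← lintegral_indicator measurableSet_Ioo]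
    congr 1
    ext x
    by_cases h : x ∈ Ioo (-c₁) c₁
    · rw [indicator_of_mem h, hfl x h.1 h.2]
    · rw [indicator_of_notMem h, hfdef, indicator_of_notMem h]; simp
  have hl := aux_lpos c₁ l K hc₁ hK hYone
  have h1 : ∀ᵐ x : ℝ, x ≠ -c₁ := by simp [ae_iff]
  have h2 : ∀ᵐ x : ℝ, x ≠ c₁ := by simp [ae_iff]
  refine ⟨l, c₁, hl, hc₁, ?_, ?_⟩
  · rw [hX]
    refine withDensity_congr_ae ?_
    filter_upwards [h1, h2] with x h1 h2
    congr 1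
    unfold stExpPdf
    by_cases h : x ∈ Ioo (-c₁) c₁
    · rw [if_pos ⟨h.1.le, h.2.le⟩, hfl x h.1 h.2, aux_normX c₁ l M hc₁ hM hl hXone]
    · rw [hfdef, indicator_of_notMem h, if_neg]
      intro h3
      exact h ⟨lt_of_le_of_ne h3.1 h1.symm, lt_of_le_of_ne h3.2 h2⟩
  · rw [hY]
    refine withDensity_congr_ae ?_
    filter_upwards [h1] with x h1
    congr 1
    unfold sExpPdf
    by_cases h : x ∈ Ioi (-c₁)
    · rw [if_pos (le_of_lt h), hgl x h, aux_normY c₁ l K hc₁ hK hl hYone]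
    · rw [hgdef, indicator_of_notMem h, if_neg]
      intro h3
      exact h (lt_of_le_of_ne h3 h1.symm)
end
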